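/- Let p be an odd prime, let G = ℚ_p^× be the multiplicative group of the field of p-adic numbers, and let N be the set of open finite-index subgroups of G. Then C(G) ∖ N is homeomorphic to the space obtained by glueing [d(p−1)] × ℕ̄ onto the Cantor space C: that is, there exist d(p−1) pairwise distinct points c_1, …, c_{d(p−1)} of C such that C(G) ∖ N is homeomorphic to the quotient of the disjoint union C ⊔ ([d(p−1)] × ℕ̄) obtained by identifying, for each i, the accumulation point (i, ∞) with c_i. -/

import Mathlib

open OnePoint

/-- The Chabauty space of a topological group `G`: the set of closed subgroups of `G`. -/
def ChabautySpace (G : Type*) [Group G] [TopologicalSpace G] : Type _ :=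
  {H : Subgroup G // IsClosed (H : Set G)}

/-- The Chabauty topology on the space of closed subgroups, generated by the sets
`O_K = {H | H ∩ K = ∅}` for `K` compact and `O'_U = {H | H ∩ U ≠ ∅}` for `U` open. -/
instance ChabautySpace.instTopologicalSpace (G : Type*) [Group G] [TopologicalSpace G] :
    TopologicalSpace (ChabautySpace G) :=
  TopologicalSpace.generateFrom
    ({S | ∃ K : Set G, IsCompact K ∧ S = {H : ChabautySpace G | (H.1 : Set G) ∩ K = ∅}} ∪
     {S | ∃ U : Set G, IsOpen U ∧ S = {H : ChabautySpace G | ((H.1 : Set G) ∩ U).Nonempty}})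

/-!
Every closed subgroup of `ℚ_pˣ` is generated by roots of unity, principal units and one element `y`
of norm less than one. For odd `p`, its intersection with `1 + p ℤ_p` is trivial or some
`1 + p ^ (n + 1) ℤ_p`, and it contains the two factors `ζ`, `u` of each of its elements `ζ u` of
norm one, because `(ζ u) ^ (p - 1) = u ^ (p - 1)` and `p - 1` is invertible in `ℤ_p`. So

* the non-open subgroups are the groups `⟨μ_d, y⟩`, with `y = 0` standing for `μ_d` itself. They
  depend continuously on `y` in the compact open unit ball and determine `y` up to a finite group,
  hence they form a compact space without isolated points, a Cantor space;
* the open subgroups of infinite index are the groups `μ_d (1 + p ^ (n + 1) ℤ_p)`, which for each of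
  the `d(p - 1)` divisors `d` of `p - 1` converge to the non-open subgroup `μ_d` as `n` grows.
-/

section Cantor

/-- The levels at which the tree of prefixes of the sequences `e y` branches off `e x`. -/
def branchLevels {X : Type*} (e : X → ℕ → Bool) (x : X) : Set ℕ :=
  {n | ∃ y, e y ∈ PiNat.cylinder (e x) n ∧ e y n ≠ e x n}

/-- The position of the `k`-th branching along `e x`; it makes sense only if there are infinitely
many of them. -/
noncomputable def branchLevel {X : Type*} (e : X → ℕ → Bool) (x : X) (k : ℕ) : ℕ :=
  Nat.nth (· ∈ branchLevels e x) k

/-- The sequence of turns taken by `e x` where it branches: the code of `x` in the full binary tree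
obtained by contracting the unbranched stretches of the tree of prefixes. -/
noncomputable def branchCode {X : Type*} (e : X → ℕ → Bool) (x : X) (k : ℕ) : Bool :=
  e x (branchLevel e x k)

variable {X : Type*} {e : X → ℕ → Bool} {x y : X} {n k : ℕ}

theorem mem_branchLevels_of_mem_cylinder (h : e y ∈ PiNat.cylinder (e x) n)
    (hn : n ∈ branchLevels e x) : n ∈ branchLevels e y := by
  obtain ⟨z, hz, hzn⟩ := hn
  rw [PiNat.mem_cylinder_iff_eq] at h
  by_cases hy : e y n = e x n
  · exact ⟨z, h ▸ hz, hy ▸ hzn⟩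
  · exact ⟨x, h ▸ PiNat.self_mem_cylinder _ _, Ne.symm hy⟩

theorem mem_branchLevels_congr (h : e y ∈ PiNat.cylinder (e x) n) :
    n ∈ branchLevels e y ↔ n ∈ branchLevels e x :=
  ⟨mem_branchLevels_of_mem_cylinder ((PiNat.mem_cylinder_comm _ _ _).1 h),
    mem_branchLevels_of_mem_cylinder h⟩

open Classical in
theorem count_branchLevels_congr (h : e y ∈ PiNat.cylinder (e x) n) :
    Nat.count (· ∈ branchLevels e y) n = Nat.count (· ∈ branchLevels e x) n :=
  le_antisymm
    (Nat.count_mono_left fun _ hm => (mem_branchLevels_congr (PiNat.cylinder_anti _ hm.le h)).1)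
    (Nat.count_mono_left fun _ hm => (mem_branchLevels_congr (PiNat.cylinder_anti _ hm.le h)).2)

theorem firstDiff_mem_branchLevels (h : e x ≠ e y) :
    PiNat.firstDiff (e x) (e y) ∈ branchLevels e x :=
  ⟨y, (PiNat.mem_cylinder_comm _ _ _).1 (PiNat.mem_cylinder_firstDiff _ _),
    (PiNat.apply_firstDiff_ne h).symm⟩

theorem branchLevel_congr (hx : (branchLevels e x).Infinite)
    (h : e y ∈ PiNat.cylinder (e x) (branchLevel e x k)) :
    branchLevel e y k = branchLevel e x k := by
  classical
  calc branchLevel e y k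
      = Nat.nth (· ∈ branchLevels e y) (Nat.count (· ∈ branchLevels e y) (branchLevel e x k)) := by
        rw [count_branchLevels_congr h, branchLevel, branchLevel,
          Nat.count_nth_of_infinite (p := (· ∈ branchLevels e x)) hx]
    _ = branchLevel e x k :=
        Nat.nth_count ((mem_branchLevels_congr h).2 (Nat.nth_mem_of_infinite hx k))

theorem branchCode_congr (hx : (branchLevels e x).Infinite)
    (h : e y ∈ PiNat.cylinder (e x) (branchLevel e x k + 1)) :
    branchCode e y k = branchCode e x k := by
  rw [branchCode, branchLevel_congr hx (PiNat.cylinder_anti _ (Nat.le_succ _) h)]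
  exact h _ (Nat.lt_succ_self _)

theorem branchCode_injective (he : Function.Injective e) : Function.Injective (branchCode e) := by
  classical
  intro x y hxy
  by_contra hne
  have hne : e x ≠ e y := he.ne hne
  set n := PiNat.firstDiff (e x) (e y)
  have hx : n ∈ branchLevels e x := firstDiff_mem_branchLevels hne
  have hxn : e x ∈ PiNat.cylinder (e y) n := PiNat.mem_cylinder_firstDiff _ _
  have hy : n ∈ branchLevels e y := (mem_branchLevels_congr hxn).1 hx
  have h := congrFun hxy (Nat.count (· ∈ branchLevels e x) n)
  rw [branchCode, branchCode, branchLevel, Nat.nth_count hx, count_branchLevels_congr hxn,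
    branchLevel, Nat.nth_count hy] at h
  exact PiNat.apply_firstDiff_ne hne h

theorem exists_mem_cylinder_branchCode [Nonempty X] (h : ∀ x, (branchLevels e x).Infinite)
    (t : ℕ → Bool) (k : ℕ) : ∃ x, branchCode e x ∈ PiNat.cylinder t k := by
  induction k with
  | zero => exact ⟨Classical.arbitrary X, by simp⟩
  | succ k ih =>
    obtain ⟨x, hx⟩ := ih
    obtain ⟨y, hxy, hne⟩ := Nat.nth_mem_of_infinite (h x) k
    have hy : branchCode e y ∈ PiNat.cylinder t k := fun j hj =>
      (branchCode_congr (h x) (PiNat.cylinder_anti _ (Nat.nth_strictMono (h x) hj) hxy)).trans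
        (hx j hj)
    have hne : branchCode e y k ≠ branchCode e x k := by
      rwa [branchCode, branchLevel_congr (h x) hxy]
    obtain ⟨z, hz, hzk⟩ : ∃ z, branchCode e z ∈ PiNat.cylinder t k ∧ branchCode e z k = t k := by
      by_cases hk : branchCode e x k = t k
      · exact ⟨x, hx, hk⟩
      · exact ⟨y, hy, (Bool.eq_not_of_ne hne).trans (Bool.eq_not_of_ne (Ne.symm hk)).symm⟩
    exact ⟨z, fun j hj => (Nat.lt_succ_iff_lt_or_eq.1 hj).elim (hz j) (· ▸ hzk)⟩

variable [TopologicalSpace X]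

theorem isOpen_preimage_cylinder (he : Continuous e) (x : ℕ → Bool) (n : ℕ) :
    IsOpen (e ⁻¹' PiNat.cylinder x n) :=
  (PiNat.isOpen_cylinder _ x n).preimage he

theorem infinite_branchLevels (he : Continuous e) (hinj : Function.Injective e)
    (hx : ¬IsOpen {x}) : (branchLevels e x).Infinite := by
  intro hfin
  obtain ⟨N, hN⟩ := hfin.bddAbove
  have hsingle : e ⁻¹' PiNat.cylinder (e x) (N + 1) = {x} := by
    refine Set.eq_singleton_iff_unique_mem.2 ⟨PiNat.self_mem_cylinder (e x) _, fun y hy => ?_⟩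
    by_contra hne
    have hne : e x ≠ e y := (hinj.ne hne).symm
    exact PiNat.apply_firstDiff_ne hne
      (hy _ (Nat.lt_succ_of_le (hN (firstDiff_mem_branchLevels hne)))).symm
  exact hx (hsingle ▸ isOpen_preimage_cylinder he (e x) (N + 1))

theorem continuous_branchCode (he : Continuous e) (h : ∀ x, (branchLevels e x).Infinite) :
    Continuous (branchCode e) :=
  continuous_pi fun _ => ((IsLocallyConstant.iff_exists_open _).2 fun x =>
    ⟨_, isOpen_preimage_cylinder he (e x) _, PiNat.self_mem_cylinder _ _,
      fun _ => branchCode_congr (h x)⟩).continuous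

theorem branchCode_surjective [CompactSpace X] [Nonempty X] (he : Continuous e)
    (h : ∀ x, (branchLevels e x).Infinite) : Function.Surjective (branchCode e) := by
  rw [← Set.range_eq_univ,
    ← (isCompact_range (continuous_branchCode he h)).isClosed.closure_eq]
  refine Set.eq_univ_of_forall fun t => mem_closure_iff.2 fun U hU htU => ?_
  obtain ⟨_, ⟨s, k, rfl⟩, -, hU⟩ :=
    (PiNat.isTopologicalBasis_cylinders _).exists_subset_of_mem_open htU hU
  obtain ⟨x, hx⟩ := exists_mem_cylinder_branchCode h s k
  exact ⟨_, hU hx, x, rfl⟩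

/-- **Brouwer's characterization of the Cantor space**. -/
theorem nonempty_homeomorph_cantor [CompactSpace X] [Nonempty X] (he : Continuous e)
    (hinj : Function.Injective e) (hperf : ∀ x : X, ¬IsOpen {x}) :
    Nonempty (X ≃ₜ (ℕ → Bool)) := by
  have h : ∀ x, (branchLevels e x).Infinite := fun x => infinite_branchLevels he hinj (hperf x)
  exact ⟨(continuous_branchCode he h).homeoOfEquivCompactToT2
    (f := .ofBijective _ ⟨branchCode_injective hinj, branchCode_surjective he h⟩)⟩

end Cantor

section Gluing

variable {X W Y ι : Type*} {c : ι → X} {a : ι → W}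

theorem exists_quot_glue_eq
    (q : Quot fun x y : X ⊕ W => ∃ i, x = Sum.inl (c i) ∧ y = Sum.inr (a i)) :
    (∃ x, q = Quot.mk _ (Sum.inl x)) ∨ ∃ w ∈ (Set.range a)ᶜ, q = Quot.mk _ (Sum.inr w) := by
  obtain ⟨x | w, rfl⟩ := Quot.exists_rep q
  · exact Or.inl ⟨x, rfl⟩
  · by_cases hw : w ∈ Set.range a
    · obtain ⟨i, rfl⟩ := hw
      exact Or.inl ⟨c i, (Quot.sound ⟨i, rfl, rfl⟩).symm⟩
    · exact Or.inr ⟨w, hw, rfl⟩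

theorem nonempty_homeomorph_quot_glue [TopologicalSpace X] [TopologicalSpace W]
    [TopologicalSpace Y] [CompactSpace X] [CompactSpace W] [T2Space Y] {f : X → Y} {g : W → Y}
    (hf : Continuous f) (hg : Continuous g) (hfg : ∀ i, f (c i) = g (a i))
    (hfinj : Function.Injective f) (hginj : Set.InjOn g (Set.range a)ᶜ)
    (hrange : (Set.range f)ᶜ = g '' (Set.range a)ᶜ) :
    Nonempty (Y ≃ₜ Quot fun x y : X ⊕ W => ∃ i, x = Sum.inl (c i) ∧ y = Sum.inr (a i)) := by
  have hlift : ∀ x y, (∃ i, x = Sum.inl (c i) ∧ y = Sum.inr (a i)) →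
      Sum.elim f g x = Sum.elim f g y := by
    rintro _ _ ⟨i, rfl, rfl⟩
    exact hfg i
  have hne : ∀ x, ∀ w ∈ (Set.range a)ᶜ, f x ≠ g w := fun x w hw h =>
    hrange.ge (Set.mem_image_of_mem g hw) ⟨x, h⟩
  have hinj : Function.Injective (Quot.lift (Sum.elim f g) hlift) := by
    intro q q' h
    obtain ⟨x, rfl⟩ | ⟨w, hw, rfl⟩ := exists_quot_glue_eq q <;>
      obtain ⟨x', rfl⟩ | ⟨w', hw', rfl⟩ := exists_quot_glue_eq q'
    · rw [hfinj h]
    · exact (hne x w' hw' h).elim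
    · exact (hne x' w hw h.symm).elim
    · rw [hginj hw hw' h]
  have hsurj : Function.Surjective (Quot.lift (Sum.elim f g) hlift) := by
    intro y
    by_cases hy : y ∈ Set.range f
    · obtain ⟨x, rfl⟩ := hy
      exact ⟨Quot.mk _ (Sum.inl x), rfl⟩
    · obtain ⟨w, -, rfl⟩ := hrange.le hy
      exact ⟨Quot.mk _ (Sum.inr w), rfl⟩
  exact ⟨((continuous_quot_lift hlift (hf.sumElim hg)).homeoOfEquivCompactToT2
    (f := .ofBijective _ ⟨hinj, hsurj⟩)).symm⟩

end Gluing

theorem isTopologicalBasis_isOpen_isCompact (X : Type*) [TopologicalSpace X] [T2Space X]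
    [LocallyCompactSpace X] [TotallyDisconnectedSpace X] :
    TopologicalSpace.IsTopologicalBasis {U : Set X | IsOpen U ∧ IsCompact U} := by
  refine TopologicalSpace.isTopologicalBasis_of_isOpen_of_nhds (fun U hU => hU.1)
    fun x U hx hU => ?_
  obtain ⟨K, hK, hxK, hKU⟩ := exists_compact_subset hU hx
  obtain ⟨W, hW, hxW, hWK⟩ :=
    (loc_compact_Haus_tot_disc_of_zero_dim (H := X)).mem_nhds_iff.1 (isOpen_interior.mem_nhds hxK)
  have hWK : W ⊆ K := hWK.trans interior_subset
  exact ⟨W, ⟨hW.isOpen, hK.of_isClosed_subset hW.isClosed hWK⟩, hxW, hWK.trans hKU⟩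

namespace ChabautySpace

open Filter Topology

variable {G : Type*} [Group G] [TopologicalSpace G]

theorem isClopen_setOf_inter_nonempty {U : Set G} (hU : IsOpen U) (hK : IsCompact U) :
    IsClopen {H : ChabautySpace G | ((H.1 : Set G) ∩ U).Nonempty} := by
  refine ⟨⟨?_⟩, TopologicalSpace.isOpen_generateFrom_of_mem (Or.inr ⟨U, hU, rfl⟩)⟩
  simp only [Set.compl_ofPred, Set.not_nonempty_iff_eq_empty]
  exact TopologicalSpace.isOpen_generateFrom_of_mem (Or.inl ⟨U, hK, rfl⟩)

theorem le_of_forall_inter_nonempty {B : Set (Set G)} (hB : TopologicalSpace.IsTopologicalBasis B)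
    {H H' : ChabautySpace G}
    (h : ∀ U ∈ B, ((H.1 : Set G) ∩ U).Nonempty → ((H'.1 : Set G) ∩ U).Nonempty) :
    H.1 ≤ H'.1 := by
  intro g hg
  by_contra hg'
  obtain ⟨U, hU, hgU, hUH'⟩ := hB.exists_subset_of_mem_open
    (show g ∈ (H'.1 : Set G)ᶜ from hg') H'.2.isOpen_compl
  obtain ⟨x, hx, hxU⟩ := h U hU ⟨g, hg, hgU⟩
  exact hUH' hxU hx

variable (G) in
theorem exists_continuous_injective [T2Space G] [LocallyCompactSpace G]
    [TotallyDisconnectedSpace G] [SecondCountableTopology G] :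
    ∃ e : ChabautySpace G → ℕ → Bool, Continuous e ∧ Function.Injective e := by
  obtain ⟨B, hB, hBc, hBasis⟩ := (isTopologicalBasis_isOpen_isCompact G).exists_countable
  obtain ⟨U, hU, -⟩ := hBasis.exists_subset_of_mem_open (Set.mem_univ (1 : G)) isOpen_univ
  obtain ⟨V, rfl⟩ := hBc.exists_eq_range ⟨U, hU⟩
  refine ⟨fun H n => {H : ChabautySpace G | ((H.1 : Set G) ∩ V n).Nonempty}.boolIndicator H,
    continuous_pi fun n => (continuous_boolIndicator_iff_isClopen _).2 ?_, fun H H' h => ?_⟩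
  · have hVn := hB (Set.mem_range_self n)
    exact isClopen_setOf_inter_nonempty hVn.1 hVn.2
  · have h' : ∀ n, ((H.1 : Set G) ∩ V n).Nonempty ↔ ((H'.1 : Set G) ∩ V n).Nonempty := fun n => by
      simpa only [← Set.mem_iff_boolIndicator] using! Bool.eq_iff_iff.1 (congrFun h n)
    refine Subtype.ext (le_antisymm (le_of_forall_inter_nonempty hBasis ?_)
      (le_of_forall_inter_nonempty hBasis ?_))
    · exact Set.forall_mem_range.2 fun n => (h' n).1
    · exact Set.forall_mem_range.2 fun n => (h' n).2

instance [T2Space G] [LocallyCompactSpace G] [TotallyDisconnectedSpace G]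
    [SecondCountableTopology G] : T2Space (ChabautySpace G) :=
  have ⟨_, he, hinj⟩ := exists_continuous_injective G
  .of_injective_continuous hinj he

variable (G) in
/-- The subspace of the closed subgroups of `G` that are not open. -/
abbrev NonOpen : Type _ :=
  {H : ChabautySpace G // ¬IsOpen (H.1 : Set G)}

theorem tendsto_of_eq_sup [IsTopologicalGroup G] [T2Space G] {α : Type*} {l : Filter α}
    {T : ChabautySpace G} (hT : IsCompact (T.1 : Set G)) {V : α → Subgroup G} [∀ i, (V i).Normal]
    (hV : Tendsto (fun i => (V i : Set G)) l (𝓝 1).smallSets)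
    {H : α → ChabautySpace G} (hH : ∀ i, (H i).1 = T.1 ⊔ V i) : Tendsto H l (𝓝 T) := by
  refine TopologicalSpace.tendsto_nhds_generateFrom_iff.2 ?_
  rintro _ (⟨K, hK, rfl⟩ | ⟨U, -, rfl⟩) hTmem
  · obtain ⟨W, hW, hTW⟩ := compact_open_separated_mul_right hT hK.isClosed.isOpen_compl
      (Set.subset_compl_iff_disjoint_right.2 (Set.disjoint_iff_inter_eq_empty.2 hTmem))
    filter_upwards [hV.eventually (eventually_smallSets_subset.2 hW)] with i hi
    change ((H i).1 : Set G) ∩ K = ∅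
    rw [← Set.disjoint_iff_inter_eq_empty, ← Set.subset_compl_iff_disjoint_right, hH i,
      Subgroup.mul_normal]
    exact (Set.mul_subset_mul_left hi).trans hTW
  · exact Filter.Eventually.of_forall fun i => hTmem.mono <|
      Set.inter_subset_inter_left U (hH i ▸ (le_sup_left : T.1 ≤ T.1 ⊔ V i))

end ChabautySpace

section Subgroups

open Topology

theorem exists_eq_inf_ker_sup_zpowers {G C : Type*} [Group G] [Group C] [IsCyclic C] (f : G →* C)
    (H : Subgroup G) : ∃ z ∈ H, H = H ⊓ f.ker ⊔ Subgroup.zpowers z := by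
  obtain ⟨⟨_, z, hz, rfl⟩, hgen⟩ := IsCyclic.exists_generator (α := H.map f)
  refine ⟨z, hz, le_antisymm (fun h hh => ?_) (sup_le inf_le_left (Subgroup.zpowers_le.2 hz))⟩
  obtain ⟨i, hi⟩ := hgen ⟨f h, Subgroup.mem_map_of_mem f hh⟩
  have hi : f z ^ i = f h := congrArg Subtype.val hi
  have hker : h * (z ^ i)⁻¹ ∈ H ⊓ f.ker := Subgroup.mem_inf.2
    ⟨mul_mem hh (inv_mem (zpow_mem hz i)), MonoidHom.mem_ker.2 (by simp [hi])⟩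
  simpa using Subgroup.mul_mem_sup hker (Subgroup.zpow_mem_zpowers z i)

theorem discreteTopology_of_finite_inter {G : Type*} [Group G] [TopologicalSpace G]
    [IsTopologicalGroup G] [T1Space G] {H : Subgroup G} {U : Set G} (hU : U ∈ 𝓝 1)
    (hfin : ((H : Set G) ∩ U).Finite) : DiscreteTopology H := by
  refine discreteTopology_of_isOpen_singleton_one (isOpen_singleton_of_finite_mem_nhds 1
    (continuous_subtype_val.continuousAt.preimage_mem_nhds hU) ?_)
  refine Set.Finite.of_finite_image (hfin.subset ?_) Subtype.val_injective.injOn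
  rintro _ ⟨x, hx, rfl⟩
  exact ⟨x.2, hx⟩

theorem eq_rootsOfUnity_natCard {R : Type*} [CommRing R] [IsDomain R] (F : Subgroup Rˣ)
    [Finite F] : F = rootsOfUnity (Nat.card F) R :=
  Subgroup.eq_of_le_of_card_ge
    (fun x hx => congrArg Subtype.val (pow_card_eq_one' (x := (⟨x, hx⟩ : F))))
    (card_rootsOfUnity R _)

end Subgroups

section AdjoinElem

open scoped Pointwise

variable {K : Type*} [CommGroupWithZero K] {T : Subgroup Kˣ}

/-- The subgroup of `Kˣ` generated by `T` and, if it is a unit, the element `y` of `K`. Allowing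
`y = 0` makes `T` itself a member of the family of the groups `adjoinElem T y`. -/
def adjoinElem (T : Subgroup Kˣ) (y : K) : Subgroup Kˣ :=
  T ⊔ Subgroup.closure (Units.val ⁻¹' {y})

theorem adjoinElem_zero (T : Subgroup Kˣ) : adjoinElem T 0 = T := by
  have : (Units.val ⁻¹' {0} : Set Kˣ) = ∅ := Set.eq_empty_of_forall_notMem Units.ne_zero
  rw [adjoinElem, this, Subgroup.closure_empty, sup_bot_eq]

theorem adjoinElem_val (T : Subgroup Kˣ) (u : Kˣ) :
    adjoinElem T (u : K) = T ⊔ Subgroup.zpowers u := by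
  have : (Units.val ⁻¹' {(u : K)} : Set Kˣ) = {u} := by
    ext v
    exact Units.val_inj
  rw [adjoinElem, this, Subgroup.zpowers_eq_closure]

theorem le_adjoinElem (T : Subgroup Kˣ) (y : K) : T ≤ adjoinElem T y :=
  le_sup_left

theorem self_mem_adjoinElem (T : Subgroup Kˣ) (u : Kˣ) : u ∈ adjoinElem T (u : K) :=
  le_sup_right (a := T) (Subgroup.subset_closure rfl)

theorem mem_adjoinElem {y : K} {g : Kˣ} : g ∈ adjoinElem T y ↔
    ∃ t ∈ T, ∃ n : ℕ, (g : K) = t * y ^ n ∨ ((g⁻¹ : Kˣ) : K) = t * y ^ n := by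
  rcases eq_or_ne y 0 with rfl | hy
  · rw [adjoinElem_zero]
    refine ⟨fun hg => ⟨g, hg, 0, Or.inl (by simp)⟩, fun ⟨t, ht, n, hg⟩ => ?_⟩
    obtain rfl : n = 0 := by
      by_contra hn
      simp [zero_pow hn] at hg
    simp only [pow_zero, mul_one, Units.val_inj] at hg
    rcases hg with rfl | rfl
    exacts [ht, inv_mem_iff.1 ht]
  · lift y to Kˣ using isUnit_iff_ne_zero.2 hy
    simp only [adjoinElem_val, ← Units.val_pow_eq_pow_val, ← Units.val_mul, Units.val_inj,
      Subgroup.mem_sup, Subgroup.exists_mem_zpowers]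
    constructor
    · rintro ⟨t, ht, i, rfl⟩
      obtain ⟨n, rfl | rfl⟩ := i.eq_nat_or_neg
      · exact ⟨t, ht, n, Or.inl (by simp)⟩
      · exact ⟨t⁻¹, inv_mem ht, n, Or.inr (by simp [mul_comm])⟩
    · rintro ⟨t, ht, n, rfl | hg⟩
      · exact ⟨t, ht, n, by simp⟩
      · exact ⟨t⁻¹, inv_mem ht, -n, by rw [← inv_inv g, hg]; simp [mul_comm]⟩

theorem adjoinElem_inter_nonempty_iff {y : K} {V : Set Kˣ} :
    ((adjoinElem T y : Set Kˣ) ∩ V).Nonempty ↔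
      ∃ q : T × ℕ, ((q.1 : Kˣ) : K) * y ^ q.2 ∈ Units.val '' (V ∪ V⁻¹) := by
  constructor
  · rintro ⟨g, hg, hgV⟩
    obtain ⟨t, ht, n, h | h⟩ := mem_adjoinElem.1 hg
    · exact ⟨(⟨t, ht⟩, n), g, Or.inl hgV, h⟩
    · exact ⟨(⟨t, ht⟩, n), g⁻¹, Or.inr (Set.inv_mem_inv.2 hgV), h⟩
  · rintro ⟨⟨⟨t, ht⟩, n⟩, g, hgV | hgV, h⟩
    · exact ⟨g, mem_adjoinElem.2 ⟨t, ht, n, Or.inl h⟩, hgV⟩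
    · exact ⟨g⁻¹, mem_adjoinElem.2 ⟨t, ht, n, Or.inr (by rwa [inv_inv])⟩, hgV⟩

end AdjoinElem

section NormOneUnits

variable {K : Type*} [NormedField K] {T : Subgroup Kˣ} {y y' : K}

variable (K) in
/-- The subgroup of the units of norm one: the units of the ring of integers if `K` is
nonarchimedean. -/
def normOneUnits : Subgroup Kˣ :=
  ((normHom : K →*₀ ℝ).toMonoidHom.comp (Units.coeHom K)).ker

theorem mem_normOneUnits {x : Kˣ} : x ∈ normOneUnits K ↔ ‖(x : K)‖ = 1 :=
  Iff.rfl

theorem le_normOneUnits_of_finite (T : Subgroup Kˣ) [Finite T] : T ≤ normOneUnits K :=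
  fun x hx => (((Units.coeHom K).comp T.subtype).isOfFinOrder
    (isOfFinOrder_of_finite (⟨x, hx⟩ : T))).norm_eq_one

theorem isOpen_normOneUnits [IsUltrametricDist K] : IsOpen (normOneUnits K : Set Kˣ) := by
  convert (IsUltrametricDist.isOpen_sphere (0 : K) one_ne_zero).preimage Units.continuous_val
  ext x
  simp [mem_normOneUnits]

theorem isCompact_normOneUnits [ProperSpace K] : IsCompact (normOneUnits K : Set Kˣ) := by
  refine Units.isOpenEmbedding_val.isEmbedding.isCompact_iff.2 ?_
  convert isCompact_sphere (0 : K) 1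
  ext x
  rw [mem_sphere_zero_iff_norm]
  refine ⟨fun ⟨_, hu, hux⟩ => hux ▸ hu, fun hx => ?_⟩
  exact ⟨Units.mk0 x (norm_ne_zero_iff.1 (hx ▸ one_ne_zero)), hx, rfl⟩

theorem adjoinElem_inf_normOneUnits (hT : T ≤ normOneUnits K) (hy : ‖y‖ < 1) :
    adjoinElem T y ⊓ normOneUnits K = T := by
  have hmem : ∀ g ∈ normOneUnits K, ∀ t ∈ T, ∀ n : ℕ, (g : K) = t * y ^ n → g ∈ T := by
    intro g hg t ht n hgt
    have hnorm : ‖y‖ ^ n = 1 := by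
      rw [← mem_normOneUnits.1 hg, hgt, norm_mul, mem_normOneUnits.1 (hT ht), one_mul, norm_pow]
    obtain rfl : n = 0 := by
      by_contra hn
      exact (pow_lt_one₀ (norm_nonneg _) hy hn).ne hnorm
    rw [pow_zero, mul_one, Units.val_inj] at hgt
    rwa [hgt]
  refine le_antisymm ?_ (le_inf (le_adjoinElem T y) hT)
  rintro g ⟨hg, hg1⟩
  obtain ⟨t, ht, n, h | h⟩ := mem_adjoinElem.1 hg
  · exact hmem g hg1 t ht n h
  · exact inv_mem_iff.1 (hmem g⁻¹ (inv_mem hg1) t ht n h)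

theorem norm_le_of_mem_adjoinElem (hT : T ≤ normOneUnits K) (hy : ‖y‖ < 1) {g : Kˣ}
    (hg : g ∈ adjoinElem T y) (hg1 : ‖(g : K)‖ < 1) : ‖(g : K)‖ ≤ ‖y‖ := by
  obtain ⟨t, ht, n, h | h⟩ := mem_adjoinElem.1 hg
  · rw [h, norm_mul, mem_normOneUnits.1 (hT ht), one_mul, norm_pow] at hg1 ⊢
    exact pow_le_of_le_one (norm_nonneg _) hy.le (by rintro rfl; simp at hg1)
  · have hinv : ‖(g : K)‖⁻¹ ≤ 1 := by
      rw [← norm_inv, ← Units.val_inv_eq_inv_val, h, norm_mul, mem_normOneUnits.1 (hT ht),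
        one_mul, norm_pow]
      exact pow_le_one₀ (norm_nonneg _) hy.le
    exact absurd hinv ((one_lt_inv₀ (norm_pos_iff.2 g.ne_zero)).2 hg1).not_ge

theorem norm_le_of_adjoinElem_le (hT : T ≤ normOneUnits K) (hy : ‖y‖ < 1) (hy' : ‖y'‖ < 1)
    (h : adjoinElem T y' ≤ adjoinElem T y) : ‖y'‖ ≤ ‖y‖ := by
  rcases eq_or_ne y' 0 with rfl | h0
  · simp
  · lift y' to Kˣ using isUnit_iff_ne_zero.2 h0
    exact norm_le_of_mem_adjoinElem hT hy (h (self_mem_adjoinElem T y')) hy'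

theorem exists_eq_mul_of_adjoinElem_eq (hT : T ≤ normOneUnits K) (hy : ‖y‖ < 1) (hy' : ‖y'‖ < 1)
    (h : adjoinElem T y = adjoinElem T y') : ∃ t ∈ T, y' = t * y := by
  have hnorm : ‖y'‖ = ‖y‖ := le_antisymm (norm_le_of_adjoinElem_le hT hy hy' h.ge)
    (norm_le_of_adjoinElem_le hT hy' hy h.le)
  rcases eq_or_ne y 0 with rfl | hy0
  · exact ⟨1, one_mem T, by simpa using hnorm⟩
  have hy0' : y' ≠ 0 := norm_ne_zero_iff.1 (hnorm ▸ norm_ne_zero_iff.2 hy0)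
  lift y to Kˣ using isUnit_iff_ne_zero.2 hy0
  lift y' to Kˣ using isUnit_iff_ne_zero.2 hy0'
  have hmem : y' * y⁻¹ ∈ adjoinElem T (y : K) ⊓ normOneUnits K := by
    refine Subgroup.mem_inf.2
      ⟨mul_mem (h.ge (self_mem_adjoinElem T y')) (inv_mem (self_mem_adjoinElem T y)),
        mem_normOneUnits.2 ?_⟩
    simp [hnorm]
  rw [adjoinElem_inf_normOneUnits hT hy] at hmem
  exact ⟨_, hmem, by simp⟩

end NormOneUnits

section AdjoinElemPoint

open Topology
open scoped Pointwise

variable {K : Type*} [NontriviallyNormedField K]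

theorem not_isOpen_of_discreteTopology {H : Subgroup Kˣ} [DiscreteTopology H] :
    ¬IsOpen (H : Set Kˣ) := by
  intro hH
  have := Units.isOpenEmbedding_val.isOpenMap _
    (hH.isOpenMap_subtype_val _ (isOpen_discrete ({1} : Set H)))
  simp only [Set.image_singleton] at this
  exact not_isOpen_singleton _ this

variable {T : Subgroup Kˣ} [Finite T]

theorem discreteTopology_adjoinElem [IsUltrametricDist K] {y : K} (hy : ‖y‖ < 1) :
    DiscreteTopology (adjoinElem T y) := by
  refine discreteTopology_of_finite_inter (isOpen_normOneUnits.mem_nhds (one_mem _)) ?_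
  rw [← Subgroup.coe_inf, adjoinElem_inf_normOneUnits (le_normOneUnits_of_finite T) hy]
  exact Set.toFinite _

variable (T) in
/-- The group generated by the finite group `T` and an element `y` of norm less than one, as a point
of the space of the closed subgroups that are not open. -/
def adjoinElemPoint [IsUltrametricDist K] (y : Metric.ball (0 : K) 1) : ChabautySpace.NonOpen Kˣ :=
  have := discreteTopology_adjoinElem (T := T) (mem_ball_zero_iff.1 y.2)
  ⟨⟨adjoinElem T (y : K), Subgroup.isClosed_of_discrete⟩, not_isOpen_of_discreteTopology⟩

theorem locallyFinite_setOf_mul_pow_mem {S : Set K} (hS : Sᶜ ∈ 𝓝 0) :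
    LocallyFinite fun q : T × ℕ =>
      {y : Metric.ball (0 : K) 1 | ((q.1 : Kˣ) : K) * (y : K) ^ q.2 ∈ S} := by
  intro y
  obtain ⟨ε, hε, hball⟩ := Metric.mem_nhds_iff.1 hS
  obtain ⟨r, hyr, hr⟩ := exists_between (mem_ball_zero_iff.1 y.2)
  have hr0 : 0 ≤ r := (norm_nonneg _).trans hyr.le
  obtain ⟨N, hN⟩ := exists_pow_lt_of_lt_one hε hr
  refine ⟨{z | ‖(z : K)‖ < r}, (isOpen_lt (by fun_prop) continuous_const).mem_nhds hyr,
    (Set.finite_univ.prod (Set.finite_Iio N)).subset ?_⟩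
  rintro ⟨t, n⟩ ⟨z, hzS, hzr⟩
  refine ⟨Set.mem_univ t, Set.mem_Iio.2 (lt_of_not_ge fun hn => hball (mem_ball_zero_iff.2 ?_) hzS)⟩
  calc ‖((t : Kˣ) : K) * (z : K) ^ n‖ = ‖(z : K)‖ ^ n := by
        rw [norm_mul, mem_normOneUnits.1 (le_normOneUnits_of_finite T t.2), one_mul, norm_pow]
    _ ≤ r ^ n := pow_le_pow_left₀ (norm_nonneg _) hzr.le n
    _ ≤ r ^ N := pow_le_pow_of_le_one hr0 hr.le hn
    _ < ε := hN

variable [IsUltrametricDist K]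

theorem continuous_adjoinElemPoint : Continuous (adjoinElemPoint T) := by
  have hcont (q : T × ℕ) :
      Continuous fun y : Metric.ball (0 : K) 1 => ((q.1 : Kˣ) : K) * (y : K) ^ q.2 := by fun_prop
  refine Continuous.subtype_mk (continuous_generateFrom_iff.2 ?_) _
  rintro _ (⟨V, hV, rfl⟩ | ⟨V, hV, rfl⟩)
  · have hS : IsClosed (Units.val '' (V ∪ V⁻¹) : Set K) :=
      ((hV.union hV.inv).image Units.continuous_val).isClosed
    have h0 : (0 : K) ∉ Units.val '' (V ∪ V⁻¹) := fun ⟨g, _, hg⟩ => g.ne_zero hg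
    convert ((locallyFinite_setOf_mul_pow_mem (T := T)
      (hS.isOpen_compl.mem_nhds h0)).isClosed_iUnion fun q => hS.preimage (hcont q)).isOpen_compl
    ext y
    simp only [Set.mem_compl_iff, Set.mem_iUnion]
    exact Set.not_nonempty_iff_eq_empty.symm.trans adjoinElem_inter_nonempty_iff.not
  · have hS : IsOpen (Units.val '' (V ∪ V⁻¹) : Set K) :=
      Units.isOpenEmbedding_val.isOpenMap _ (hV.union hV.inv)
    convert isOpen_iUnion fun q : T × ℕ => hS.preimage (hcont q)
    ext y
    simp only [Set.mem_iUnion]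
    exact adjoinElem_inter_nonempty_iff

theorem not_isOpen_singleton_adjoinElemPoint (y : Metric.ball (0 : K) 1) :
    ¬IsOpen {adjoinElemPoint T y} := by
  intro hy
  have hopen := Metric.isOpen_ball.isOpenMap_subtype_val _
    (hy.preimage (continuous_adjoinElemPoint (T := T)))
  refine infinite_of_mem_nhds (y : K) (hopen.mem_nhds ⟨y, rfl, rfl⟩) ?_
  refine (Set.finite_range fun t : T => ((t : Kˣ) : K) * (y : K)).subset ?_
  rintro _ ⟨y', hy', rfl⟩
  have h : adjoinElem T (y' : K) = adjoinElem T (y : K) :=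
    congrArg (fun H : ChabautySpace.NonOpen Kˣ => H.1.1) hy'
  obtain ⟨t, ht, hty⟩ := exists_eq_mul_of_adjoinElem_eq (le_normOneUnits_of_finite T)
    (mem_ball_zero_iff.1 y.2) (mem_ball_zero_iff.1 y'.2) h.symm
  exact ⟨⟨t, ht⟩, hty.symm⟩

end AdjoinElemPoint

section Ultrametric

variable {K : Type*} [NormedField K] [IsUltrametricDist K] {x : K}

theorem norm_sub_le_max (x y : K) : ‖x - y‖ ≤ max ‖x‖ ‖y‖ := by
  simpa only [dist_eq_norm, sub_zero, zero_sub, norm_neg] using dist_triangle_max x 0 y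

theorem norm_eq_one_of_norm_sub_one_lt_one (hx : ‖x - 1‖ < 1) : ‖x‖ = 1 := by
  simpa [hx.le] using IsUltrametricDist.norm_add_eq_max_of_norm_ne_norm (x := x - 1) (y := 1)
    (by simpa using hx.ne)

theorem norm_pow_sub_one_sub_le (hx : ‖x - 1‖ < 1) (c : ℕ) :
    ‖x ^ c - 1 - c * (x - 1)‖ ≤ ‖x - 1‖ ^ 2 := by
  induction c with
  | zero => simp
  | succ c ih =>
    have h : x ^ (c + 1) - 1 - ((c + 1 : ℕ) : K) * (x - 1) =
        (x ^ c - 1 - c * (x - 1)) * x + c * (x - 1) ^ 2 := by push_cast; ring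
    rw [h]
    refine (IsUltrametricDist.norm_add_le_max _ _).trans (max_le ?_ ?_)
    · rwa [norm_mul, norm_eq_one_of_norm_sub_one_lt_one hx, mul_one]
    · rw [norm_mul, norm_pow]
      exact mul_le_of_le_one_left (by positivity) (IsUltrametricDist.norm_natCast_le_one K c)

theorem norm_pow_sub_one_eq (hx : ‖x - 1‖ < 1) {c : ℕ} (hc : ‖(c : K)‖ = 1) :
    ‖x ^ c - 1‖ = ‖x - 1‖ := by
  rcases (norm_nonneg (x - 1)).eq_or_lt' with h0 | hpos
  · simp [sub_eq_zero.1 (norm_eq_zero.1 h0)]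
  have hcx : ‖(c : K) * (x - 1)‖ = ‖x - 1‖ := by rw [norm_mul, hc, one_mul]
  have hlt : ‖x ^ c - 1 - c * (x - 1)‖ < ‖(c : K) * (x - 1)‖ :=
    calc ‖x ^ c - 1 - c * (x - 1)‖ ≤ ‖x - 1‖ ^ 2 := norm_pow_sub_one_sub_le hx c
      _ < ‖x - 1‖ := pow_lt_self_of_lt_one₀ hpos hx one_lt_two
      _ = ‖(c : K) * (x - 1)‖ := hcx.symm
  calc ‖x ^ c - 1‖ = ‖(x ^ c - 1 - c * (x - 1)) + c * (x - 1)‖ := by rw [sub_add_cancel]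
    _ = ‖x - 1‖ := by
      rw [IsUltrametricDist.norm_add_eq_max_of_norm_ne_norm hlt.ne, max_eq_right hlt.le, hcx]

end Ultrametric

theorem exists_pow_eq_one_sub_mem {R : Type*} [CommRing R] {I : Ideal R} [HenselianRing R I]
    {n : ℕ} (hn : IsUnit (n : R ⧸ I)) {x : R} (hx : x ^ n - 1 ∈ I) :
    ∃ ζ : R, ζ ^ n = 1 ∧ ζ - x ∈ I := by
  rcases eq_or_ne n 0 with rfl | hn0
  · exact ⟨x, pow_zero x, by simp⟩
  have hxn : Ideal.Quotient.mk I x ^ n = 1 := by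
    simpa only [map_pow, map_one] using Ideal.Quotient.eq.2 hx
  have hunit : IsUnit (Ideal.Quotient.mk I x) := .of_pow_eq_one hxn hn0
  obtain ⟨ζ, hζ, hζx⟩ := HenselianRing.is_henselian (I := I) (Polynomial.X ^ n - 1)
    (Polynomial.monic_X_pow_sub_C 1 hn0) x (by simpa using hx)
    (by simpa [Polynomial.derivative_X_pow] using hn.mul (hunit.pow (n - 1)))
  exact ⟨ζ, by simpa [sub_eq_zero] using hζ, hζx⟩

section PrincipalUnits

open Topology

theorem norm_inv_mul_sub_one {K : Type*} [NormedField K] {x y : Kˣ} (hy : ‖(y : K)‖ = 1) :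
    ‖((y⁻¹ * x : Kˣ) : K) - 1‖ = ‖(x : K) - y‖ :=
  calc ‖((y⁻¹ * x : Kˣ) : K) - 1‖ = ‖(y : K) * (((y⁻¹ * x : Kˣ) : K) - 1)‖ := by
        rw [norm_mul, hy, one_mul]
    _ = ‖(x : K) - y‖ := by rw [mul_sub, ← Units.val_mul, mul_inv_cancel_left, mul_one]

variable {p : ℕ} [hp : Fact p.Prime]

variable (p) in
theorem inv_prime_pos : (0 : ℝ) < (p : ℝ)⁻¹ :=
  inv_pos.2 (mod_cast hp.out.pos)

variable (p) in
theorem inv_prime_lt_one : (p : ℝ)⁻¹ < 1 :=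
  inv_lt_one_of_one_lt₀ (mod_cast hp.out.one_lt)

theorem norm_lt_one_iff_le_inv {x : ℚ_[p]} : ‖x‖ < 1 ↔ ‖x‖ ≤ (p : ℝ)⁻¹ := by
  simpa using (Padic.norm_le_pow_iff_norm_lt_pow_add_one x (-1)).symm

theorem exists_norm_eq_inv_pow {x : ℚ_[p]} (h0 : x ≠ 0) (hx : ‖x‖ < 1) :
    ∃ n : ℕ, ‖x‖ = (p : ℝ)⁻¹ ^ (n + 1) := by
  have hp1 : (1 : ℝ) < p := mod_cast hp.out.one_lt
  rw [Padic.norm_eq_zpow_neg_valuation h0] at hx ⊢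
  obtain ⟨n, hn⟩ := Int.eq_succ_of_zero_lt (neg_lt_zero.1 ((zpow_lt_one_iff_right₀ hp1).1 hx))
  exact ⟨n, by rw [hn, ← inv_zpow', ← zpow_natCast, Nat.cast_succ]⟩

theorem norm_pow_prime_sub_one (hodd : Odd p) {x : ℚ_[p]} (hx : ‖x - 1‖ < 1) :
    ‖x ^ p - 1‖ = (p : ℝ)⁻¹ * ‖x - 1‖ := by
  obtain ⟨x, rfl⟩ : ∃ y : ℤ_[p], (y : ℚ_[p]) = x :=
    ⟨⟨x, (norm_eq_one_of_norm_sub_one_lt_one hx).le⟩, rfl⟩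
  obtain ⟨b, hb⟩ := (PadicInt.norm_lt_one_iff_dvd (x - 1)).1 hx
  obtain ⟨c, hc⟩ := odd_sq_dvd_geom_sum₂_sub (1 : ℤ_[p]) b hodd
  obtain rfl : x = 1 + p * b := by rw [← hb, add_sub_cancel]
  simp only [one_pow, mul_one] at hc
  have hsum : ∑ i ∈ Finset.range p, (1 + p * b) ^ i = p * (1 + p * c) := by linear_combination hc
  have hunit : ‖(1 + p * c : ℤ_[p])‖ = 1 := norm_eq_one_of_norm_sub_one_lt_one (K := ℚ_[p]) <| by
    simpa using (PadicInt.norm_lt_one_iff_dvd (p * c : ℤ_[p])).2 (dvd_mul_right _ c)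
  have := congrArg norm (geom_sum_mul (1 + p * b : ℤ_[p]) p)
  rw [hsum, norm_mul, norm_mul, hunit, PadicInt.norm_p, mul_one] at this
  exact this.symm

/-- The group `1 + p ^ (n + 1) ℤ_p` of the principal units of level `n + 1`. -/
noncomputable def principalUnits (p : ℕ) [Fact p.Prime] (n : ℕ) : Subgroup ℚ_[p]ˣ :=
  .ofDiv {x | ‖(x : ℚ_[p]) - 1‖ ≤ (p : ℝ)⁻¹ ^ (n + 1)} ⟨1, by simp⟩ fun x hx y hy => by
    have hy1 : ‖(y : ℚ_[p])‖ = 1 := norm_eq_one_of_norm_sub_one_lt_one <|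
      hy.trans_lt (pow_lt_one₀ (inv_prime_pos p).le (inv_prime_lt_one p) n.succ_ne_zero)
    rw [Set.mem_ofPred_eq, mul_comm, norm_inv_mul_sub_one hy1, ← sub_sub_sub_cancel_right _ _ 1]
    exact (norm_sub_le_max _ _).trans (max_le hx hy)

theorem mem_principalUnits {n : ℕ} {x : ℚ_[p]ˣ} :
    x ∈ principalUnits p n ↔ ‖(x : ℚ_[p]) - 1‖ ≤ (p : ℝ)⁻¹ ^ (n + 1) :=
  Iff.rfl

theorem mem_principalUnits_zero {x : ℚ_[p]ˣ} :
    x ∈ principalUnits p 0 ↔ ‖(x : ℚ_[p]) - 1‖ < 1 := by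
  rw [mem_principalUnits, zero_add, pow_one, norm_lt_one_iff_le_inv]

theorem exists_norm_sub_one_eq (n : ℕ) :
    ∃ u : ℚ_[p]ˣ, ‖(u : ℚ_[p]) - 1‖ = (p : ℝ)⁻¹ ^ (n + 1) := by
  have hlt : ‖(1 + (p : ℚ_[p]) ^ (n + 1)) - 1‖ < 1 := by
    rw [add_sub_cancel_left, norm_pow, Padic.norm_p]
    exact pow_lt_one₀ (inv_prime_pos p).le (inv_prime_lt_one p) n.succ_ne_zero
  have h0 : (1 + (p : ℚ_[p]) ^ (n + 1)) ≠ 0 :=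
    norm_ne_zero_iff.1 (norm_eq_one_of_norm_sub_one_lt_one hlt ▸ one_ne_zero)
  exact ⟨Units.mk0 _ h0, by rw [Units.val_mk0, add_sub_cancel_left, norm_pow, Padic.norm_p]⟩

theorem strictAnti_principalUnits : StrictAnti (principalUnits p) := by
  refine strictAnti_nat_of_succ_lt fun n => SetLike.lt_iff_le_and_exists.2 ⟨fun x hx => ?_, ?_⟩
  · exact hx.trans (pow_le_pow_of_le_one (inv_prime_pos p).le (inv_prime_lt_one p).le (by lia))
  · obtain ⟨u, hu⟩ := exists_norm_sub_one_eq (p := p) n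
    refine ⟨u, hu.le, fun hu' => ?_⟩
    rw [mem_principalUnits, hu] at hu'
    exact (pow_lt_pow_right_of_lt_one₀ (inv_prime_pos p) (inv_prime_lt_one p)
      (n + 1).lt_succ_self).not_ge hu'

theorem principalUnits_le_normOneUnits (n : ℕ) : principalUnits p n ≤ normOneUnits ℚ_[p] :=
  fun _ hx => norm_eq_one_of_norm_sub_one_lt_one
    (mem_principalUnits_zero.1 (strictAnti_principalUnits.antitone n.zero_le hx))

theorem hasAntitoneBasis_principalUnits :
    (𝓝 (1 : ℚ_[p]ˣ)).HasAntitoneBasis fun n => (principalUnits p n : Set ℚ_[p]ˣ) := by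
  refine ⟨?_, strictAnti_principalUnits.antitone⟩
  rw [Units.isOpenEmbedding_val.isInducing.nhds_eq_comap]
  refine ((Metric.nhds_basis_closedBall_pow (inv_prime_pos p) (inv_prime_lt_one p)).comap
    (Units.val : ℚ_[p]ˣ → ℚ_[p])).to_hasBasis
      (fun n _ => ⟨n, trivial, fun x hx => ?_⟩) (fun n _ => ⟨n + 1, trivial, fun x hx => ?_⟩)
  · rw [Set.mem_preimage, Units.val_one, mem_closedBall_iff_norm]
    exact (mem_principalUnits.1 hx).trans
      (pow_le_pow_of_le_one (inv_prime_pos p).le (inv_prime_lt_one p).le n.le_succ)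
  · exact mem_closedBall_iff_norm.1 hx

theorem isOpen_principalUnits (n : ℕ) : IsOpen (principalUnits p n : Set ℚ_[p]ˣ) :=
  Subgroup.isOpen_of_mem_nhds _ (hasAntitoneBasis_principalUnits.mem n)

end PrincipalUnits

section ClosedSubgroups

open Topology Filter

theorem mem_of_forall_mem_sup {G ι : Type*} [Group G] [TopologicalSpace G] [IsTopologicalGroup G]
    {H : Subgroup G} (hH : IsClosed (H : Set G)) {l : Filter ι} [l.NeBot] {V : ι → Subgroup G}
    [∀ i, (V i).Normal] (hV : Tendsto (fun i => (V i : Set G)) l (𝓝 1).smallSets) {x : G}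
    (hx : ∀ i, x ∈ H ⊔ V i) : x ∈ H := by
  rw [← SetLike.mem_coe, ← hH.closure_eq, mem_closure_iff_nhds_one]
  intro U hU
  obtain ⟨i, hi⟩ := (hV.eventually (eventually_smallSets_subset.2 hU)).exists
  obtain ⟨v, hv, h, hh, rfl⟩ := Subgroup.mem_sup_of_normal_left.1 (sup_comm H (V i) ▸ hx i)
  exact ⟨h, hh, hi (by simpa using hv)⟩

variable {p : ℕ} [hp : Fact p.Prime] {H : Subgroup ℚ_[p]ˣ} {x y : ℚ_[p]ˣ} {m n : ℕ}

theorem exists_mem_norm_sub_one_eq (hodd : Odd p) (hx : x ∈ H)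
    (hxn : ‖(x : ℚ_[p]) - 1‖ = (p : ℝ)⁻¹ ^ (n + 1)) (hnm : n ≤ m) :
    ∃ y ∈ H, ‖(y : ℚ_[p]) - 1‖ = (p : ℝ)⁻¹ ^ (m + 1) := by
  induction m, hnm using Nat.le_induction with
  | base => exact ⟨x, hx, hxn⟩
  | succ m _ ih =>
    obtain ⟨y, hy, hym⟩ := ih
    refine ⟨y ^ p, pow_mem hy p, ?_⟩
    rw [Units.val_pow_eq_pow_val, norm_pow_prime_sub_one hodd, hym, ← pow_succ']
    exact mem_principalUnits_zero.1 (strictAnti_principalUnits.antitone m.zero_le hym.le)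

theorem exists_norm_sub_pow_le (hyn : ‖(y : ℚ_[p]) - 1‖ = (p : ℝ)⁻¹ ^ (n + 1))
    (hx : x ∈ principalUnits p n) :
    ∃ c : ℕ, ‖(x : ℚ_[p]) - (y : ℚ_[p]) ^ c‖ ≤ (p : ℝ)⁻¹ ^ (n + 2) := by
  have hn : 0 < (p : ℝ)⁻¹ ^ (n + 1) := pow_pos (inv_prime_pos p) _
  have hy0 : (y : ℚ_[p]) - 1 ≠ 0 := norm_ne_zero_iff.1 (hyn ▸ hn.ne')
  obtain ⟨c, -, hc⟩ := PadicInt.exists_mem_range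
    (⟨((x : ℚ_[p]) - 1) / (y - 1), by
      rw [norm_div, hyn]; exact div_le_one_of_le₀ hx hn.le⟩ : ℤ_[p])
  replace hc : ‖((x : ℚ_[p]) - 1) / (y - 1) - c‖ ≤ (p : ℝ)⁻¹ :=
    norm_lt_one_iff_le_inv.1 (PadicInt.mem_nonunits.1 ((IsLocalRing.mem_maximalIdeal _).1 hc))
  refine ⟨c, ?_⟩
  have hsplit : (x : ℚ_[p]) - (y : ℚ_[p]) ^ c = (((x : ℚ_[p]) - 1) / (y - 1) - c) * (y - 1) -
      ((y : ℚ_[p]) ^ c - 1 - c * (y - 1)) := by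
    field_simp
    ring
  rw [hsplit]
  refine (norm_sub_le_max _ _).trans (max_le ?_ ?_)
  · rw [norm_mul, hyn, pow_succ' _ (n + 1)]
    exact mul_le_mul_of_nonneg_right hc hn.le
  · refine (norm_pow_sub_one_sub_le ?_ c).trans ?_
    · exact mem_principalUnits_zero.1 (strictAnti_principalUnits.antitone n.zero_le hyn.le)
    · rw [hyn, ← pow_mul]
      exact pow_le_pow_of_le_one (inv_prime_pos p).le (inv_prime_lt_one p).le (by lia)

theorem principalUnits_le_sup_succ (hy : y ∈ H)
    (hyn : ‖(y : ℚ_[p]) - 1‖ = (p : ℝ)⁻¹ ^ (n + 1)) :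
    principalUnits p n ≤ H ⊔ principalUnits p (n + 1) := by
  intro x hx
  obtain ⟨c, hc⟩ := exists_norm_sub_pow_le hyn hx
  have hyc : y ^ c ∈ normOneUnits ℚ_[p] := pow_mem (principalUnits_le_normOneUnits n hyn.le) c
  have hmem : (y ^ c)⁻¹ * x ∈ principalUnits p (n + 1) := by
    rwa [mem_principalUnits, norm_inv_mul_sub_one (mem_normOneUnits.1 hyc),
      Units.val_pow_eq_pow_val]
  simpa using Subgroup.mul_mem_sup (pow_mem hy c) hmem

theorem principalUnits_le_of_isClosed (hodd : Odd p) (hH : IsClosed (H : Set ℚ_[p]ˣ))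
    (hx : x ∈ H) (hxn : ‖(x : ℚ_[p]) - 1‖ = (p : ℝ)⁻¹ ^ (n + 1)) : principalUnits p n ≤ H := by
  have hsup : ∀ k, n ≤ k → principalUnits p n ≤ H ⊔ principalUnits p k := by
    intro k hk
    induction k, hk using Nat.le_induction with
    | base => exact le_sup_right
    | succ k hk ih =>
      obtain ⟨y, hy, hyk⟩ := exists_mem_norm_sub_one_eq hodd hx hxn hk
      exact ih.trans (sup_le le_sup_left (principalUnits_le_sup_succ hy hyk))
  intro z hz
  refine mem_of_forall_mem_sup hH hasAntitoneBasis_principalUnits.tendsto_smallSets fun k => ?_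
  exact sup_le_sup_left (strictAnti_principalUnits.antitone (le_max_right n k)) H
    (hsup _ (le_max_left n k) hz)

theorem exists_principalUnits_le_of_mem_principalUnits (hodd : Odd p)
    (hH : IsClosed (H : Set ℚ_[p]ˣ)) (hx : x ∈ H) (hx1 : x ≠ 1) (hx0 : x ∈ principalUnits p 0) :
    ∃ n, x ∈ principalUnits p n ∧ principalUnits p n ≤ H := by
  have hne : (x : ℚ_[p]) - 1 ≠ 0 := sub_ne_zero.2 (by simpa using hx1)
  obtain ⟨n, hn⟩ := exists_norm_eq_inv_pow hne (mem_principalUnits_zero.1 hx0)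
  exact ⟨n, hn.le, principalUnits_le_of_isClosed hodd hH hx hn⟩

theorem inf_principalUnits_zero_eq (hodd : Odd p) (hH : IsClosed (H : Set ℚ_[p]ˣ)) :
    H ⊓ principalUnits p 0 = ⊥ ∨ ∃ n, H ⊓ principalUnits p 0 = principalUnits p n := by
  classical
  refine (Subgroup.bot_or_exists_ne_one _).imp_right fun ⟨x, ⟨hx, hx0⟩, hx1⟩ => ?_
  have hex : ∃ n, principalUnits p n ≤ H :=
    (exists_principalUnits_le_of_mem_principalUnits hodd hH hx hx1 hx0).imp fun _ => And.right
  refine ⟨Nat.find hex, le_antisymm ?_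
    (le_inf (Nat.find_spec hex) (strictAnti_principalUnits.antitone (Nat.zero_le _)))⟩
  rintro y ⟨hy, hy0⟩
  rcases eq_or_ne y 1 with rfl | hy1
  · exact one_mem _
  · obtain ⟨n, hyn, hn⟩ := exists_principalUnits_le_of_mem_principalUnits hodd hH hy hy1 hy0
    exact strictAnti_principalUnits.antitone (Nat.find_min' hex hn) hyn

end ClosedSubgroups

section RootsOfUnity

variable {p : ℕ} [hp : Fact p.Prime]

instance neZero_prime_sub_one : NeZero (p - 1) :=
  ⟨(Nat.sub_pos_of_lt hp.out.one_lt).ne'⟩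

theorem exists_pow_eq_one_toZMod_eq {a : ZMod p} (ha : a ≠ 0) :
    ∃ ζ : ℤ_[p], ζ ^ (p - 1) = 1 ∧ PadicInt.toZMod ζ = a := by
  obtain ⟨x, rfl⟩ := ZMod.ringHom_surjective (PadicInt.toZMod : ℤ_[p] →+* ZMod p) a
  have hunit : IsUnit ((p - 1 : ℕ) : ℤ_[p] ⧸ IsLocalRing.maximalIdeal ℤ_[p]) := by
    rw [← map_natCast (Ideal.Quotient.mk _)]
    exact (PadicInt.isUnit_iff.2 Padic.norm_natCast_p_sub_one).map _
  have hx : x ^ (p - 1) - 1 ∈ IsLocalRing.maximalIdeal ℤ_[p] := by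
    rw [← PadicInt.ker_toZMod, RingHom.mem_ker, map_sub, map_pow, map_one,
      ZMod.pow_card_sub_one_eq_one ha, sub_self]
  obtain ⟨ζ, hζ, hζx⟩ := exists_pow_eq_one_sub_mem hunit hx
  rw [← PadicInt.ker_toZMod, RingHom.sub_mem_ker_iff] at hζx
  exact ⟨ζ, hζ, hζx⟩

theorem exists_inv_mul_mem_principalUnits_zero {u : ℚ_[p]ˣ} (hu : u ∈ normOneUnits ℚ_[p]) :
    ∃ ζ ∈ rootsOfUnity (p - 1) ℚ_[p], ζ⁻¹ * u ∈ principalUnits p 0 := by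
  obtain ⟨x, hx⟩ : ∃ x : ℤ_[p], (x : ℚ_[p]) = u := ⟨⟨u, (mem_normOneUnits.1 hu).le⟩, rfl⟩
  have hx0 : PadicInt.toZMod x ≠ 0 := fun h => by
    rw [← RingHom.mem_ker, PadicInt.ker_toZMod, IsLocalRing.mem_maximalIdeal,
      PadicInt.mem_nonunits, PadicInt.norm_def, hx, mem_normOneUnits.1 hu] at h
    exact h.false
  obtain ⟨ζ, hζ, hζx⟩ := exists_pow_eq_one_toZMod_eq hx0
  rw [eq_comm, ← RingHom.sub_mem_ker_iff, PadicInt.ker_toZMod, IsLocalRing.mem_maximalIdeal,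
    PadicInt.mem_nonunits] at hζx
  have hζ' : (ζ : ℚ_[p]) ^ (p - 1) = 1 := congrArg Subtype.val hζ
  refine ⟨rootsOfUnity.mkOfPowEq _ hζ', SetLike.coe_mem _, ?_⟩
  rw [mem_principalUnits_zero, norm_inv_mul_sub_one
    (mem_normOneUnits.1 (le_normOneUnits_of_finite _ (SetLike.coe_mem _))), ← hx]
  exact hζx

instance hasEnoughRootsOfUnity_padic : HasEnoughRootsOfUnity ℚ_[p] (p - 1) := by
  have hsurj : Function.Surjective
      ((Units.map (PadicInt.toZMod : ℤ_[p] →+* ZMod p).toMonoidHom).comp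
        (rootsOfUnity (p - 1) ℤ_[p]).subtype) := fun a =>
    have ⟨ζ, hζ, hζa⟩ := exists_pow_eq_one_toZMod_eq a.ne_zero
    ⟨rootsOfUnity.mkOfPowEq ζ hζ, Units.ext hζa⟩
  have hle : p - 1 ≤ Nat.card (rootsOfUnity (p - 1) ℤ_[p]) :=
    calc p - 1 = Nat.card (ZMod p)ˣ := by rw [Nat.card_eq_fintype_card, ZMod.card_units]
      _ ≤ Nat.card (rootsOfUnity (p - 1) ℤ_[p]) := Nat.card_le_card_of_surjective _ hsurj
  obtain ⟨ζ, hζ⟩ := (HasEnoughRootsOfUnity.of_card_le hle).prim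
  exact ⟨⟨ζ, hζ.map_of_injective (f := PadicInt.Coe.ringHom) Subtype.val_injective⟩,
    rootsOfUnity.isCyclic _ _⟩

instance neZero_coe_divisors {n : ℕ} (d : n.divisors) : NeZero (d : ℕ) :=
  ⟨(Nat.pos_of_mem_divisors d.2).ne'⟩

theorem rootsOfUnity_inf_principalUnits_zero :
    rootsOfUnity (p - 1) ℚ_[p] ⊓ principalUnits p 0 = ⊥ := by
  refine (Subgroup.eq_bot_iff_forall _).2 fun ζ ⟨hζ, hζ0⟩ => ?_
  have := norm_pow_sub_one_eq (mem_principalUnits_zero.1 hζ0) Padic.norm_natCast_p_sub_one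
  rw [← Units.val_pow_eq_pow_val, (mem_rootsOfUnity _ _).1 hζ, Units.val_one, sub_self, norm_zero,
    eq_comm, norm_eq_zero, sub_eq_zero] at this
  exact Units.ext this

theorem natCard_rootsOfUnity_padic (d : (p - 1).divisors) :
    Nat.card (rootsOfUnity d ℚ_[p]) = d := by
  have := HasEnoughRootsOfUnity.of_dvd ℚ_[p] (Nat.dvd_of_mem_divisors d.2)
  exact HasEnoughRootsOfUnity.natCard_rootsOfUnity _ _

theorem exists_eq_rootsOfUnity_of_le {F : Subgroup ℚ_[p]ˣ} (hF : F ≤ rootsOfUnity (p - 1) ℚ_[p]) :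
    ∃ d : (p - 1).divisors, F = rootsOfUnity d ℚ_[p] := by
  have : Finite F := .of_injective _ (Subgroup.inclusion_injective hF)
  have hcard := Subgroup.card_dvd_of_le hF
  rw [HasEnoughRootsOfUnity.natCard_rootsOfUnity] at hcard
  exact ⟨⟨Nat.card F, Nat.mem_divisors.2 ⟨hcard, NeZero.ne _⟩⟩, eq_rootsOfUnity_natCard F⟩

variable {H : Subgroup ℚ_[p]ˣ}

theorem mem_of_pow_mem_of_isClosed (hodd : Odd p) (hH : IsClosed (H : Set ℚ_[p]ˣ)) {u : ℚ_[p]ˣ}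
    (hu : u ∈ principalUnits p 0) {c : ℕ} (hc : p.Coprime c) (huc : u ^ c ∈ H) : u ∈ H := by
  rcases eq_or_ne u 1 with rfl | hu1
  · exact one_mem H
  have hu0 := mem_principalUnits_zero.1 hu
  obtain ⟨n, hn⟩ := exists_norm_eq_inv_pow (sub_ne_zero.2 (by simpa using hu1)) hu0
  refine principalUnits_le_of_isClosed hodd hH huc (n := n) ?_ hn.le
  rw [Units.val_pow_eq_pow_val, norm_pow_sub_one_eq hu0 (Padic.norm_natCast_eq_one_iff.2 hc), hn]

theorem exists_inf_normOneUnits_eq_sup (hodd : Odd p) (hH : IsClosed (H : Set ℚ_[p]ˣ)) :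
    ∃ d : (p - 1).divisors,
      H ⊓ normOneUnits ℚ_[p] = rootsOfUnity d ℚ_[p] ⊔ H ⊓ principalUnits p 0 := by
  obtain ⟨d, hd⟩ := exists_eq_rootsOfUnity_of_le (F := H ⊓ rootsOfUnity (p - 1) ℚ_[p]) inf_le_right
  refine ⟨d, hd ▸ le_antisymm ?_ (sup_le (inf_le_inf_left H (le_normOneUnits_of_finite _))
    (inf_le_inf_left H (principalUnits_le_normOneUnits 0)))⟩
  rintro u ⟨hu, hu1⟩
  obtain ⟨ζ, hζ, hζu⟩ := exists_inv_mul_mem_principalUnits_zero hu1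
  have hpow : (ζ⁻¹ * u) ^ (p - 1) ∈ H := by
    rw [mul_pow, inv_pow, (mem_rootsOfUnity _ _).1 hζ, inv_one, one_mul]
    exact pow_mem hu _
  have hmem : ζ⁻¹ * u ∈ H := mem_of_pow_mem_of_isClosed hodd hH hζu
    ((Nat.coprime_self_sub_right hp.out.one_le).2 p.coprime_one_right) hpow
  have hζH : ζ ∈ H := by simpa using H.mul_mem hu (H.inv_mem hmem)
  simpa using Subgroup.mul_mem_sup (Subgroup.mem_inf.2 ⟨hζH, hζ⟩) (Subgroup.mem_inf.2 ⟨hmem, hζu⟩)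

end RootsOfUnity

section Index

theorem index_eq_zero_iff_eq_bot {A : Subgroup (Multiplicative ℤ)} : A.index = 0 ↔ A = ⊥ := by
  obtain ⟨z, rfl⟩ := (Subgroup.isCyclic_iff_exists_zpowers_eq_top A).1 inferInstance
  calc (Subgroup.zpowers z).index = 0 ↔ z.toAdd.natAbs = 0 :=
        Eq.congr_left (Int.index_zmultiples z.toAdd)
    _ ↔ z = 1 := Int.natAbs_eq_zero.trans toAdd_eq_zero
    _ ↔ Subgroup.zpowers z = ⊥ := Subgroup.zpowers_eq_bot.symm

theorem index_map_eq_zero_iff {G C : Type*} [Group G] [TopologicalSpace G]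
    [IsTopologicalGroup G] [Group C] {f : G →* C} (hf : Function.Surjective f)
    (hker : IsCompact (f.ker : Set G)) {H : Subgroup G} [H.Normal] (hH : IsOpen (H : Set G)) :
    (H.map f).index = 0 ↔ H.index = 0 := by
  have : CompactSpace f.ker := isCompact_iff_compactSpace.1 hker
  have := (H.subgroupOf f.ker).quotient_finite_of_isOpen (hH.preimage continuous_subtype_val)
  have hrel : H.relIndex f.ker ≠ 0 := Subgroup.index_ne_zero_of_finite
  rw [Subgroup.index_map, MonoidHom.range_eq_top.2 hf, Subgroup.index_top, mul_one,
    ← Subgroup.relIndex_mul_index (le_sup_left : H ≤ H ⊔ f.ker), Subgroup.relIndex_sup_left,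
    mul_eq_zero, or_iff_right hrel]

end Index

section Classification

variable {p : ℕ} [hp : Fact p.Prime]

variable (p) in
/-- The `p`-adic valuation as a homomorphism on the unit group. -/
noncomputable def unitsValuation : ℚ_[p]ˣ →* Multiplicative ℤ :=
  .mk' (fun u => .ofAdd (u : ℚ_[p]).valuation) fun u v => by
    rw [Units.val_mul, Padic.valuation_mul u.ne_zero v.ne_zero, ofAdd_add]

theorem unitsValuation_surjective : Function.Surjective (unitsValuation p) := fun k =>
  ⟨Units.mk0 ((p : ℚ_[p]) ^ k.toAdd) (zpow_ne_zero _ (NeZero.ne _)), by simp [unitsValuation]⟩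

theorem ker_unitsValuation : (unitsValuation p).ker = normOneUnits ℚ_[p] := by
  ext u
  have h1 : (1 : ℝ) < p := mod_cast hp.out.one_lt
  rw [MonoidHom.mem_ker, mem_normOneUnits, Padic.norm_eq_zpow_neg_valuation u.ne_zero,
    zpow_eq_one_iff_right₀ (zero_le_one.trans h1.le) h1.ne', neg_eq_zero]
  exact ofAdd_eq_one

theorem index_eq_zero_iff_le_normOneUnits {H : Subgroup ℚ_[p]ˣ} (hH : IsOpen (H : Set ℚ_[p]ˣ)) :
    H.index = 0 ↔ H ≤ normOneUnits ℚ_[p] := by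
  have hker : IsCompact ((unitsValuation p).ker : Set ℚ_[p]ˣ) := by
    rw [ker_unitsValuation]
    exact isCompact_normOneUnits
  rw [← index_map_eq_zero_iff unitsValuation_surjective hker hH, index_eq_zero_iff_eq_bot,
    Subgroup.map_eq_bot_iff, ker_unitsValuation]

theorem exists_eq_adjoinElem (hodd : Odd p) {H : Subgroup ℚ_[p]ˣ}
    (hH : IsClosed (H : Set ℚ_[p]ˣ)) (hH' : ¬IsOpen (H : Set ℚ_[p]ˣ)) :
    ∃ (d : (p - 1).divisors) (y : ℚ_[p]), ‖y‖ < 1 ∧ H = adjoinElem (rootsOfUnity d ℚ_[p]) y := by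
  have hbot : H ⊓ principalUnits p 0 = ⊥ := (inf_principalUnits_zero_eq hodd hH).resolve_right
    fun ⟨n, hn⟩ => hH' (Subgroup.isOpen_mono (hn ▸ inf_le_left) (isOpen_principalUnits n))
  obtain ⟨d, hd⟩ := exists_inf_normOneUnits_eq_sup hodd hH
  obtain ⟨z, hz, hHz⟩ := exists_eq_inf_ker_sup_zpowers (unitsValuation p) H
  rw [ker_unitsValuation, hd, hbot, sup_bot_eq] at hHz
  rw [hbot, sup_bot_eq] at hd
  refine ⟨d, ?_⟩
  rcases lt_trichotomy ‖(z : ℚ_[p])‖ 1 with hlt | heq | hgt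
  · exact ⟨z, hlt, by rwa [adjoinElem_val]⟩
  · have hzd : z ∈ rootsOfUnity d ℚ_[p] := hd ▸ ⟨hz, heq⟩
    exact ⟨0, by simp, by rwa [adjoinElem_zero, ← sup_eq_left.2 (Subgroup.zpowers_le.2 hzd)]⟩
  · exact ⟨(z⁻¹ : ℚ_[p]ˣ), by simpa using inv_lt_one_of_one_lt₀ hgt,
      by rwa [adjoinElem_val, Subgroup.zpowers_inv]⟩

variable (p) in
/-- The group `μ_d (1 + p ^ (n + 1) ℤ_p)`; these are the open subgroups of infinite index. -/
noncomputable def rootUnits (d n : ℕ) : Subgroup ℚ_[p]ˣ :=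
  rootsOfUnity d ℚ_[p] ⊔ principalUnits p n

theorem isOpen_rootUnits (d n : ℕ) : IsOpen (rootUnits p d n : Set ℚ_[p]ˣ) :=
  Subgroup.isOpen_mono le_sup_right (isOpen_principalUnits n)

theorem index_rootUnits (d n : ℕ) [NeZero d] : (rootUnits p d n).index = 0 :=
  (index_eq_zero_iff_le_normOneUnits (isOpen_rootUnits d n)).2
    (sup_le (le_normOneUnits_of_finite _) (principalUnits_le_normOneUnits n))

theorem exists_eq_rootUnits (hodd : Odd p) {H : Subgroup ℚ_[p]ˣ} (hH : IsOpen (H : Set ℚ_[p]ˣ))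
    (hindex : H.index = 0) : ∃ (d : (p - 1).divisors) (n : ℕ), H = rootUnits p d n := by
  have hclosed := H.isClosed_of_isOpen hH
  obtain ⟨d, hd⟩ := exists_inf_normOneUnits_eq_sup hodd hclosed
  rw [inf_eq_left.2 ((index_eq_zero_iff_le_normOneUnits hH).1 hindex)] at hd
  rcases inf_principalUnits_zero_eq hodd hclosed with hbot | ⟨n, hn⟩
  · have : DiscreteTopology H :=
      discreteTopology_of_finite_inter ((isOpen_principalUnits (p := p) 0).mem_nhds (one_mem _))
        (by simp [← Subgroup.coe_inf, hbot])
    exact absurd hH not_isOpen_of_discreteTopology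
  · exact ⟨d, n, by rw [hd, hn, rootUnits]⟩

theorem rootUnits_inf_rootsOfUnity (d : (p - 1).divisors) (n : ℕ) :
    rootUnits p d n ⊓ rootsOfUnity (p - 1) ℚ_[p] = rootsOfUnity d ℚ_[p] := by
  have hbot : principalUnits p n ⊓ rootsOfUnity (p - 1) ℚ_[p] = ⊥ :=
    eq_bot_mono (inf_le_inf_right _ (strictAnti_principalUnits.antitone n.zero_le))
      (inf_comm (rootsOfUnity _ ℚ_[p]) _ ▸ rootsOfUnity_inf_principalUnits_zero)
  rw [rootUnits, sup_inf_assoc_of_le _ (rootsOfUnity_le_of_dvd (Nat.dvd_of_mem_divisors d.2)),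
    hbot, sup_bot_eq]

theorem rootUnits_inf_principalUnits_zero (d : (p - 1).divisors) (n : ℕ) :
    rootUnits p d n ⊓ principalUnits p 0 = principalUnits p n := by
  have hbot : rootsOfUnity d ℚ_[p] ⊓ principalUnits p 0 = ⊥ :=
    eq_bot_mono (inf_le_inf_right _ (rootsOfUnity_le_of_dvd (Nat.dvd_of_mem_divisors d.2)))
      rootsOfUnity_inf_principalUnits_zero
  rw [rootUnits, sup_comm, sup_inf_assoc_of_le _ (strictAnti_principalUnits.antitone n.zero_le),
    hbot, sup_bot_eq]

theorem rootsOfUnity_divisors_injective :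
    Function.Injective fun d : (p - 1).divisors => rootsOfUnity d ℚ_[p] := fun d d' h =>
  Subtype.ext <| by
    simpa only [natCard_rootsOfUnity_padic] using congrArg (fun F : Subgroup ℚ_[p]ˣ => Nat.card F) h

theorem rootUnits_injective :
    Function.Injective fun q : (p - 1).divisors × ℕ => rootUnits p q.1 q.2 := by
  rintro ⟨d, n⟩ ⟨d', n'⟩ h
  replace h : rootUnits p d n = rootUnits p d' n' := h
  refine Prod.ext (rootsOfUnity_divisors_injective (p := p) ?_)
    (strictAnti_principalUnits.injective (?_ : principalUnits p n = principalUnits p n'))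
  · change rootsOfUnity d ℚ_[p] = rootsOfUnity d' ℚ_[p]
    rw [← rootUnits_inf_rootsOfUnity d n, h, rootUnits_inf_rootsOfUnity]
  · rw [← rootUnits_inf_principalUnits_zero d, h, rootUnits_inf_principalUnits_zero]

end Classification

section ChabautySpaces

instance compactSpace_ball {X : Type*} [PseudoMetricSpace X] [ProperSpace X] [IsUltrametricDist X]
    (x : X) (r : ℝ) : CompactSpace (Metric.ball x r) :=
  isCompact_iff_compactSpace.1
    (Metric.isCompact_of_isClosed_isBounded (IsUltrametricDist.isClosed_ball _ _)
      Metric.isBounded_ball)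

section Units

variable {K : Type*} [GroupWithZero K] [TopologicalSpace K] [ContinuousInv₀ K]

instance totallyDisconnectedSpace_units [TotallyDisconnectedSpace K] :
    TotallyDisconnectedSpace Kˣ :=
  ⟨Units.isEmbedding_val₀.isTotallyDisconnected_range.1
    (isTotallyDisconnected_of_totallyDisconnectedSpace _) |>.isTotallyDisconnected_univ⟩

instance secondCountableTopology_units [SecondCountableTopology K] :
    SecondCountableTopology Kˣ :=
  Units.isEmbedding_val₀.secondCountableTopology

end Units

variable {p : ℕ} [Fact p.Prime]

theorem exists_eq_adjoinElemPoint (hodd : Odd p) (H : ChabautySpace.NonOpen ℚ_[p]ˣ) :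
    ∃ (d : (p - 1).divisors) (y : Metric.ball (0 : ℚ_[p]) 1),
      adjoinElemPoint (rootsOfUnity d ℚ_[p]) y = H := by
  obtain ⟨d, y, hy, hH⟩ := exists_eq_adjoinElem hodd H.1.2 H.2
  exact ⟨d, ⟨y, mem_ball_zero_iff.2 hy⟩, Subtype.ext (Subtype.ext hH.symm)⟩

theorem compactSpace_nonOpen (hodd : Odd p) : CompactSpace (ChabautySpace.NonOpen ℚ_[p]ˣ) := by
  refine ⟨?_⟩
  convert isCompact_iUnion fun d : (p - 1).divisors =>
    isCompact_range (continuous_adjoinElemPoint (T := rootsOfUnity d ℚ_[p]))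
  exact (Set.eq_univ_of_forall fun H => Set.mem_iUnion.2 (exists_eq_adjoinElemPoint hodd H)).symm

theorem nonempty_nonOpen_homeomorph_cantor (hodd : Odd p) :
    Nonempty (ChabautySpace.NonOpen ℚ_[p]ˣ ≃ₜ (ℕ → Bool)) := by
  have := compactSpace_nonOpen hodd
  have : Nonempty (ChabautySpace.NonOpen ℚ_[p]ˣ) :=
    ⟨adjoinElemPoint ⊥ ⟨0, Metric.mem_ball_self one_pos⟩⟩
  obtain ⟨e, he, hinj⟩ := ChabautySpace.exists_continuous_injective ℚ_[p]ˣ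
  refine nonempty_homeomorph_cantor (he.comp continuous_subtype_val)
    (hinj.comp Subtype.val_injective) fun H => ?_
  obtain ⟨d, y, rfl⟩ := exists_eq_adjoinElemPoint hodd H
  exact not_isOpen_singleton_adjoinElemPoint y

/-- The group of the `d`-th roots of unity, as a point of the space of the non-open subgroups. -/
noncomputable def rootsOfUnityPoint (d : (p - 1).divisors) : ChabautySpace.NonOpen ℚ_[p]ˣ :=
  adjoinElemPoint (rootsOfUnity d ℚ_[p]) ⟨0, Metric.mem_ball_self one_pos⟩

theorem coe_rootsOfUnityPoint (d : (p - 1).divisors) :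
    (rootsOfUnityPoint d).1.1 = rootsOfUnity d ℚ_[p] :=
  adjoinElem_zero _

theorem rootsOfUnityPoint_injective : Function.Injective (rootsOfUnityPoint (p := p)) :=
  fun d d' h => rootsOfUnity_divisors_injective (p := p) <| by
    simpa only [coe_rootsOfUnityPoint] using
      congrArg (fun H : ChabautySpace.NonOpen ℚ_[p]ˣ => H.1.1) h

/-- The sequence of the groups `rootUnits p d n`, indexed by `n`, followed by its limit. -/
noncomputable def rootUnitsPoint (d : (p - 1).divisors) : OnePoint ℕ → ChabautySpace ℚ_[p]ˣ
  | OnePoint.some n => ⟨rootUnits p d n, Subgroup.isClosed_of_isOpen _ (isOpen_rootUnits d n)⟩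
  | ∞ => (rootsOfUnityPoint d).1

theorem continuous_rootUnitsPoint (d : (p - 1).divisors) : Continuous (rootUnitsPoint d) := by
  refine (OnePoint.continuous_iff_from_nat _).2 (ChabautySpace.tendsto_of_eq_sup ?_
    hasAntitoneBasis_principalUnits.tendsto_smallSets fun n => ?_)
  · change IsCompact ((rootsOfUnityPoint d).1.1 : Set ℚ_[p]ˣ)
    rw [coe_rootsOfUnityPoint]
    exact isCompact_iff_compactSpace.2 (Finite.compactSpace (X := rootsOfUnity d ℚ_[p]))
  · exact congrArg (· ⊔ principalUnits p n) (coe_rootsOfUnityPoint d).symm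

theorem isOpen_rootUnitsPoint_iff {d : (p - 1).divisors} {x : OnePoint ℕ} :
    IsOpen ((rootUnitsPoint d x).1 : Set ℚ_[p]ˣ) ↔ x ≠ ∞ := by
  induction x using OnePoint.rec with
  | infty => exact iff_of_false (rootsOfUnityPoint d).2 (not_not_intro rfl)
  | coe n => exact iff_of_true (isOpen_rootUnits d n) (OnePoint.coe_ne_infty n)

/-- The closed subgroups of `ℚ_pˣ` outside the set `N` of the open subgroups of finite index. -/
abbrev NotOpenFiniteIndex (p : ℕ) [Fact p.Prime] : Set (ChabautySpace ℚ_[p]ˣ) :=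
  {H | ¬(IsOpen (H.1 : Set ℚ_[p]ˣ) ∧ H.1.index ≠ 0)}

/-- The inclusion of the non-open subgroups into the complement of `N`. -/
def nonOpenInclusion (H : ChabautySpace.NonOpen ℚ_[p]ˣ) : NotOpenFiniteIndex p :=
  ⟨H.1, fun h => H.2 h.1⟩

theorem continuous_nonOpenInclusion : Continuous (nonOpenInclusion (p := p)) :=
  continuous_subtype_val.subtype_mk _

theorem nonOpenInclusion_injective : Function.Injective (nonOpenInclusion (p := p)) :=
  fun _ _ h => Subtype.ext (congrArg (fun H : NotOpenFiniteIndex p => H.1) h)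

theorem range_nonOpenInclusion :
    Set.range (nonOpenInclusion (p := p)) = {H | ¬IsOpen (H.1.1 : Set ℚ_[p]ˣ)} :=
  Set.Subset.antisymm (Set.range_subset_iff.2 fun H => H.2) fun H hH => ⟨⟨H.1, hH⟩, rfl⟩

theorem rootUnitsPoint_mem_notOpenFiniteIndex (d : (p - 1).divisors) (x : OnePoint ℕ) :
    rootUnitsPoint d x ∈ NotOpenFiniteIndex p := by
  rintro ⟨hopen, hindex⟩
  obtain ⟨n, rfl⟩ := OnePoint.ne_infty_iff_exists.1 (isOpen_rootUnitsPoint_iff.1 hopen)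
  exact hindex (index_rootUnits d n)

/-- The sequences `rootUnitsPoint d` with their limits, as a map into the complement of `N`. -/
noncomputable def rootUnitsBranch (q : (p - 1).divisors × OnePoint ℕ) : NotOpenFiniteIndex p :=
  ⟨rootUnitsPoint q.1 q.2, rootUnitsPoint_mem_notOpenFiniteIndex q.1 q.2⟩

theorem continuous_rootUnitsBranch : Continuous (rootUnitsBranch (p := p)) :=
  (continuous_prod_of_discrete_left.2 continuous_rootUnitsPoint).subtype_mk _

theorem rootUnitsBranch_injOn : Set.InjOn (rootUnitsBranch (p := p)) {q | q.2 ≠ ∞} := by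
  rintro ⟨d, x⟩ hx ⟨d', x'⟩ hx' h
  obtain ⟨n, rfl⟩ := OnePoint.ne_infty_iff_exists.1 hx
  obtain ⟨n', rfl⟩ := OnePoint.ne_infty_iff_exists.1 hx'
  have heq : rootUnits p d n = rootUnits p d' n' :=
    congrArg (fun H : NotOpenFiniteIndex p => H.1.1) h
  obtain ⟨rfl, rfl⟩ := Prod.ext_iff.1 (@rootUnits_injective p _ (d, n) (d', n') heq)
  rfl

theorem image_rootUnitsBranch (hodd : Odd p) :
    rootUnitsBranch (p := p) '' {q | q.2 ≠ ∞} = {H | IsOpen (H.1.1 : Set ℚ_[p]ˣ)} := by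
  refine Set.Subset.antisymm ?_ fun H hH => ?_
  · rintro _ ⟨q, hq, rfl⟩
    exact isOpen_rootUnitsPoint_iff.2 hq
  · obtain ⟨d, n, hn⟩ := exists_eq_rootUnits hodd hH (not_not.1 fun h => H.2 ⟨hH, h⟩)
    exact ⟨(d, n), OnePoint.coe_ne_infty n, Subtype.ext (Subtype.ext hn.symm)⟩

end ChabautySpaces

/-- For `p` an odd prime and `G = ℚ_p^×`, with `N` the set of open finite-index subgroups,
`C(G) ∖ N` is homeomorphic to the space obtained by glueing `[d(p-1)] × ℕ̄` on the Cantor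
space `{0,1}^ℕ`, the `d(p-1)` accumulation points `(i, ∞)` being identified with `d(p-1)`
pairwise distinct points of the Cantor space. -/
theorem chabauty_padicUnits_minus_N_odd (p : ℕ) [Fact p.Prime] (hp : Odd p) :
    ∃ c : Fin (p - 1).divisors.card → (ℕ → Bool), Function.Injective c ∧
      Nonempty (
        {H : ChabautySpace ℚ_[p]ˣ | ¬(IsOpen (H.1 : Set ℚ_[p]ˣ) ∧ H.1.index ≠ 0)} ≃ₜ
        Quot (fun x y : (ℕ → Bool) ⊕ (Fin (p - 1).divisors.card × OnePoint ℕ) =>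
          ∃ i, x = Sum.inl (c i) ∧ y = Sum.inr (i, ∞))) := by
  obtain ⟨φ⟩ := nonempty_nonOpen_homeomorph_cantor hp
  let σ := (p - 1).divisors.equivFin.symm
  let g : Fin (p - 1).divisors.card × OnePoint ℕ ≃ₜ (p - 1).divisors × OnePoint ℕ :=
    σ.toHomeomorphOfDiscrete.prodCongr (.refl _)
  have hcompl : (Set.range fun i => (i, ∞))ᶜ = g ⁻¹' {q | q.2 ≠ ∞} := by
    ext ⟨i, x⟩
    simp [g, eq_comm]
  refine ⟨fun i => φ (rootsOfUnityPoint (σ i)),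
    φ.injective.comp (rootsOfUnityPoint_injective.comp σ.injective),
    nonempty_homeomorph_quot_glue (f := nonOpenInclusion ∘ φ.symm) (g := rootUnitsBranch ∘ g)
      (continuous_nonOpenInclusion.comp φ.symm.continuous)
      (continuous_rootUnitsBranch.comp g.continuous) (fun i => ?_)
      (nonOpenInclusion_injective.comp φ.symm.injective) ?_ ?_⟩
  · exact congrArg nonOpenInclusion (φ.symm_apply_apply _)
  · rw [hcompl]
    exact rootUnitsBranch_injOn.comp g.injective.injOn (Set.mapsTo_preimage _ _)
  · rw [hcompl, φ.symm.surjective.range_comp, range_nonOpenInclusion, Set.image_comp,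
      g.surjective.image_preimage, image_rootUnitsBranch hp]
    ext H
    exact not_not
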